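/- Let A be a Hopf algebra over a field k with comultiplication Δ, counit ε and antipode S, and let Φ ∈ A⊗A⊗A be an invertible element satisfying: (id⊗ε⊗id)(Φ) = 1⊗1; (Δ⊗id)(Δ(a)) = Φ·(id⊗Δ)(Δ(a))·Φ^{-1} for all a ∈ A; and the 3-cocycle identity (Δ⊗id⊗id)(Φ)·(id⊗id⊗Δ)(Φ) = (Φ⊗1)·(id⊗Δ⊗id)(Φ)·(1⊗Φ). Define γ = Σ S(Φ')·Φ''·S(Φ'''), where Φ = Σ Φ'⊗Φ''⊗Φ'''. Then γ = Σ \barΦ'·S(\barΦ'')·\barΦ''', where Φ^{-1} = Σ \barΦ'⊗\barΦ''⊗\barΦ''', and γ is a central element of A. -/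

import Mathlib

open TensorProduct

set_option maxHeartbeats 1000000
set_option synthInstance.maxHeartbeats 400000

noncomputable section

/-- Generators of the restricted quantum group `Q = \bar U_i sl(2)`. -/
inductive QGen : Type
  | E | F | K | Kinv
deriving DecidableEq

/-- The free algebra on the generators. -/
abbrev FA : Type := FreeAlgebra ℂ QGen

def ιE : FA := FreeAlgebra.ι ℂ QGen.E
def ιF : FA := FreeAlgebra.ι ℂ QGen.F
def ιK : FA := FreeAlgebra.ι ℂ QGen.K
def ιKi : FA := FreeAlgebra.ι ℂ QGen.Kinv

/-- Defining relations of `\bar U_i sl(2)` (at `q = i`, i.e. `p = 2`). -/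
inductive QRel : FA → FA → Prop
  | KKi : QRel (ιK * ιKi) 1
  | KiK : QRel (ιKi * ιK) 1
  | KEKi : QRel (ιK * ιE * ιKi) (-ιE)
  | KFKi : QRel (ιK * ιF * ιKi) (-ιF)
  | EF : QRel (ιE * ιF - ιF * ιE) ((2 * Complex.I)⁻¹ • (ιK - ιKi))
  | Esq : QRel (ιE ^ 2) 0
  | Fsq : QRel (ιF ^ 2) 0
  | K4 : QRel (ιK ^ 4) 1

/-- The restricted quantum group `\bar U_i sl(2)`: the quotient of the free algebra
by the two-sided ideal generated by the defining relations. -/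
abbrev Q : Type := RingQuot QRel

def gE : Q := RingQuot.mkAlgHom ℂ QRel ιE
def gF : Q := RingQuot.mkAlgHom ℂ QRel ιF
def gK : Q := RingQuot.mkAlgHom ℂ QRel ιK
def gKi : Q := RingQuot.mkAlgHom ℂ QRel ιKi

section Gadgets

variable (k : Type) [Field k] (A : Type) [Ring A] [Algebra k A]

abbrev TP2 : Type := A ⊗[k] A
abbrev TP3 : Type := A ⊗[k] (A ⊗[k] A)
abbrev TP4 : Type := A ⊗[k] (A ⊗[k] (A ⊗[k] A))

/-- Multiplication `a ⊗ b ↦ a * b`. -/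
def mulA : TP2 k A →ₗ[k] A := LinearMap.mul' k A

/-- Tensor flip `a ⊗ b ↦ b ⊗ a`. -/
def flipA : TP2 k A →ₗ[k] TP2 k A := (TensorProduct.comm k A A).toLinearMap

/-- `a ↦ a ⊗ 1`. -/
def lTen : A →ₗ[k] TP2 k A := (TensorProduct.mk k A A).flip 1

/-- `a ↦ 1 ⊗ a`. -/
def rTen : A →ₗ[k] TP2 k A := TensorProduct.mk k A A 1

/-- `a ⊗ b ↦ a ⊗ b ⊗ 1`. -/
def emb12 : TP2 k A →ₗ[k] TP3 k A := TensorProduct.map LinearMap.id (lTen k A)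

/-- `a ⊗ b ↦ a ⊗ 1 ⊗ b`. -/
def emb13 : TP2 k A →ₗ[k] TP3 k A := TensorProduct.map LinearMap.id (rTen k A)

/-- `a ⊗ b ↦ 1 ⊗ a ⊗ b`. -/
def emb23 : TP2 k A →ₗ[k] TP3 k A := TensorProduct.mk k A (TP2 k A) 1

/-- `a ⊗ b ⊗ c ↦ a ⊗ c ⊗ b`. -/
def perm132 : TP3 k A →ₗ[k] TP3 k A := TensorProduct.map LinearMap.id (flipA k A)

/-- `a ⊗ b ⊗ c ↦ b ⊗ c ⊗ a`. -/
def perm231 : TP3 k A →ₗ[k] TP3 k A :=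
  (TensorProduct.assoc k A A A).toLinearMap ∘ₗ (TensorProduct.comm k A (TP2 k A)).toLinearMap

/-- `a ⊗ b ⊗ c ↦ c ⊗ a ⊗ b`. -/
def perm312 : TP3 k A →ₗ[k] TP3 k A :=
  (TensorProduct.comm k (TP2 k A) A).toLinearMap ∘ₗ (TensorProduct.assoc k A A A).symm.toLinearMap

/-- `a ⊗ b ⊗ c ↦ b ⊗ a ⊗ c`. -/
def perm213 : TP3 k A →ₗ[k] TP3 k A :=
  (TensorProduct.assoc k A A A).toLinearMap ∘ₗ
    (TensorProduct.map (flipA k A) LinearMap.id) ∘ₗ (TensorProduct.assoc k A A A).symm.toLinearMap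

variable {k A}

/-- `(Δ ⊗ id)` on two tensor factors, landing in the triple tensor product. -/
def copL (D : A →ₐ[k] TP2 k A) : TP2 k A →ₗ[k] TP3 k A :=
  (TensorProduct.assoc k A A A).toLinearMap ∘ₗ TensorProduct.map D.toLinearMap LinearMap.id

/-- `(id ⊗ Δ)` on two tensor factors. -/
def copR (D : A →ₐ[k] TP2 k A) : TP2 k A →ₗ[k] TP3 k A :=
  TensorProduct.map LinearMap.id D.toLinearMap

/-- `(ε ⊗ id) : A ⊗ A → A`. -/
def cuL (ce : A →ₐ[k] k) : TP2 k A →ₗ[k] A :=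
  (TensorProduct.lid k A).toLinearMap ∘ₗ TensorProduct.map ce.toLinearMap LinearMap.id

/-- `(id ⊗ ε) : A ⊗ A → A`. -/
def cuR (ce : A →ₐ[k] k) : TP2 k A →ₗ[k] A :=
  (TensorProduct.rid k A).toLinearMap ∘ₗ TensorProduct.map LinearMap.id ce.toLinearMap

/-- `(id ⊗ ε ⊗ id) : A ⊗ A ⊗ A → A ⊗ A`. -/
def cuMid (ce : A →ₐ[k] k) : TP3 k A →ₗ[k] TP2 k A :=
  TensorProduct.map LinearMap.id (cuL ce)

/-- `(Δ ⊗ id ⊗ id)`. -/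
def cop4_1 (D : A →ₐ[k] TP2 k A) : TP3 k A →ₗ[k] TP4 k A :=
  (TensorProduct.assoc k A A (TP2 k A)).toLinearMap ∘ₗ TensorProduct.map D.toLinearMap LinearMap.id

/-- `(id ⊗ Δ ⊗ id)`. -/
def cop4_2 (D : A →ₐ[k] TP2 k A) : TP3 k A →ₗ[k] TP4 k A :=
  TensorProduct.map LinearMap.id (copL D)

/-- `(id ⊗ id ⊗ Δ)`. -/
def cop4_3 (D : A →ₐ[k] TP2 k A) : TP3 k A →ₗ[k] TP4 k A :=
  TensorProduct.map LinearMap.id (copR D)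

/-- `a ⊗ b ⊗ c ↦ a ⊗ b ⊗ c ⊗ 1`, i.e. `Φ ↦ Φ ⊗ 1`. -/
def pad4 : TP3 k A →ₗ[k] TP4 k A :=
  TensorProduct.map LinearMap.id (TensorProduct.map LinearMap.id (lTen k A))

/-- `a ⊗ b ⊗ c ↦ f(a) * g(b) * h(c)`. -/
def tmap3 (f g h : A →ₗ[k] A) : TP3 k A →ₗ[k] A :=
  mulA k A ∘ₗ TensorProduct.map f (mulA k A ∘ₗ TensorProduct.map g h)

/-- `a ⊗ b ↦ S(a) * b`, used in the antipode axiom `m ∘ (S ⊗ id) ∘ Δ = 1·ε`. -/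
def antipL (s : A →ₗ[k] A) : TP2 k A →ₗ[k] A := mulA k A ∘ₗ TensorProduct.map s LinearMap.id

/-- `a ⊗ b ↦ a * S(b)`. -/
def antipR (s : A →ₗ[k] A) : TP2 k A →ₗ[k] A := mulA k A ∘ₗ TensorProduct.map LinearMap.id s

end Gadgets

/-- Central idempotent `e₀ = (1 + K²)/2`. -/
def e0 : Q := (2:ℂ)⁻¹ • (1 + gK ^ 2)

/-- Central idempotent `e₁ = (1 − K²)/2`. -/
def e1 : Q := (2:ℂ)⁻¹ • (1 - gK ^ 2)

/-- `f⁺ = −i F`. -/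
def fp : Q := (-Complex.I) • gF

/-- `f⁻ = E K⁻¹`. -/
def fm : Q := gE * gKi

/-- The Casimir element `C = FE − (i/4)(K − K⁻¹)`. -/
def Cas : Q := gF * gE - (Complex.I / 4) • (gK - gKi)

def t2 (a b : Q) : TP2 ℂ Q := a ⊗ₜ[ℂ] b

def t3 (a b c : Q) : TP3 ℂ Q := a ⊗ₜ[ℂ] (b ⊗ₜ[ℂ] c)

def eEF : Q := gE * gF
def eEK : Q := gE * gK
def eFK : Q := gF * gK
def eEFK : Q := gE * gF * gK

/-- `Φ^{010}` component of the coassociator. -/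
def Phi010 : TP3 ℂ Q :=
  t3 1 1 1 - (1 + Complex.I) • t3 gE gK gF + (1 - Complex.I) • t3 eFK gK eEK
    + (2:ℂ) • t3 eEFK 1 eEFK

/-- `Φ^{101}` component of the coassociator. -/
def Phi101 : TP3 ℂ Q :=
  (Complex.I - 1) • t3 1 gF eEK + t3 1 gK 1 + (2:ℂ) • t3 1 eEF eEFK
    - (1 + Complex.I) • t3 1 eEK gF - (1 + Complex.I) • t3 gE eFK 1
    + (2 * Complex.I) • t3 gE eEFK gF + (1 - Complex.I) • t3 eFK gE 1
    - (2 * Complex.I) • t3 eFK eEFK eEK - (2:ℂ) • t3 eEFK eEF 1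

/-- `Φ^{111}` component of the coassociator. -/
def Phi111 (β : ℂ) : TP3 ℂ Q :=
  (Complex.I * β ^ 2) • (
    (1 + Complex.I) • t3 1 gF eEK - t3 1 gK 1 - (2:ℂ) • t3 1 eEF 1
      - (2 * Complex.I) • t3 1 eEF eEFK + (1 + Complex.I) • t3 1 eEK gF
      - (1 + Complex.I) • t3 gE 1 gF + (1 + Complex.I) • t3 gE eFK 1
      + (2 * Complex.I) • t3 gE eFK eEFK + (2:ℂ) • t3 gE eEFK gF
      - (1 + Complex.I) • t3 eFK 1 eEK + (1 + Complex.I) • t3 eFK gE 1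
      + (2 * Complex.I) • t3 eFK gE eEFK + (2:ℂ) • t3 eFK eEFK eEK
      + (2 * Complex.I) • t3 eEFK gF eEK + (2 * Complex.I) • t3 eEFK gK eEFK
      - (2 * Complex.I) • t3 eEFK eEF 1 + (2 * Complex.I) • t3 eEFK eEK gF
      + (4:ℂ) • t3 eEFK eEF eEFK)

/-- The coassociator `Φ` of the quasi-Hopf algebra structure on `Q`. -/
def Phi (β : ℂ) : TP3 ℂ Q :=
  t3 e0 e0 e0 + t3 e1 e0 e0 + Phi010 * t3 e0 e1 e0 + t3 e0 e0 e1
    + t3 e1 e1 e0 + Phi101 * t3 e1 e0 e1 + t3 e0 e1 e1 + Phi111 β * t3 e1 e1 e1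

def R00 : TP2 ℂ Q :=
  (2:ℂ)⁻¹ • ((t2 1 1 + t2 1 gK + t2 gK 1 - t2 gK gK) * (t2 1 1 + (2 * Complex.I) • t2 gE gF))

def R01 : TP2 ℂ Q :=
  (2:ℂ)⁻¹ • ((t2 1 1 - Complex.I • t2 1 gK + t2 gK 1 + Complex.I • t2 gK gK) *
    (t2 1 1 + (1 - Complex.I) • t2 eFK eEK - (1 - Complex.I) • t2 gE gF
      + (1 + Complex.I) • t2 eEFK 1 + (2 * Complex.I) • t2 eEFK eEFK))

def R10 : TP2 ℂ Q :=
  (2:ℂ)⁻¹ • ((t2 1 1 + t2 1 gK - Complex.I • t2 gK 1 + Complex.I • t2 gK gK) *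
    (t2 1 gK + (1 - Complex.I) • t2 eFK gE + (1 - Complex.I) • t2 gE eFK
      - (1 - Complex.I) • t2 1 eEF - (2 * Complex.I) • t2 eEFK eEF))

def R11 (β : ℂ) : TP2 ℂ Q :=
  (β / 2) • ((t2 1 1 - Complex.I • t2 1 gK - Complex.I • t2 gK 1 + t2 gK gK) *
    ((-Complex.I) • t2 gK 1 + (2 * Complex.I) • t2 eEK gF + (1 - Complex.I) • t2 gK eEFK
      - (1 + Complex.I) • t2 eEF 1 - (2 * Complex.I) • t2 eEF eEFK))

/-- The universal R-matrix `R` of the quasi-triangular quasi-Hopf structure on `Q`. -/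
def Rmat (β : ℂ) : TP2 ℂ Q :=
  R00 * t2 e0 e0 + R01 * t2 e0 e1 + R10 * t2 e1 e0 + R11 β * t2 e1 e1

/-- The standard R-matrix `R_st` of the quotient `Q/(K²-1)`. -/
def Rst : TP2 ℂ Q :=
  (2:ℂ)⁻¹ • ∑ m ∈ Finset.range 2, ∑ n ∈ Finset.range 2,
    ((-1:ℂ) ^ (m * n)) • (t2 (gK ^ m) (gK ^ n) * (t2 1 1 + (2 * Complex.I) • t2 gE gF))

/-- The monodromy matrix `M = R₂₁ · R`. -/
def Mmat (β : ℂ) : TP2 ℂ Q := flipA ℂ Q (Rmat β) * Rmat β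

/-- The ribbon element `v = (e₀ − iβ K e₁)(1 − 2 f⁺ f⁻)`. -/
def vRib (β : ℂ) : Q := (e0 - (Complex.I * β) • (gK * e1)) * (1 - (2:ℂ) • (fp * fm))

/-- The coevaluation element `β = e₀ − 2iβ² C e₁`. -/
def bbEl (β : ℂ) : Q := e0 - (2 * Complex.I * β ^ 2) • (Cas * e1)

/-- `b ⊗ c ↦ S(b · bb · S(c))`, inner part of the Drinfeld element. -/
def uInner (S : Q →ₗ[ℂ] Q) (bb : Q) : TP2 ℂ Q →ₗ[ℂ] Q :=
  S ∘ₗ mulA ℂ Q ∘ₗ TensorProduct.map (LinearMap.mulRight ℂ bb) S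

/-- `Φ' ⊗ Φ'' ⊗ Φ''' ↦ S(Φ'' · bb · S(Φ''')) ⊗ Φ'`. -/
def uMap1 (S : Q →ₗ[ℂ] Q) (bb : Q) : TP3 ℂ Q →ₗ[ℂ] TP2 ℂ Q :=
  TensorProduct.map (uInner S bb) LinearMap.id ∘ₗ (TensorProduct.comm ℂ Q (TP2 ℂ Q)).toLinearMap

/-- `R' ⊗ R'' ↦ S(R'') · al · R'`. -/
def uMap2 (S : Q →ₗ[ℂ] Q) (al : Q) : TP2 ℂ Q →ₗ[ℂ] Q :=
  mulA ℂ Q ∘ₗ TensorProduct.map (LinearMap.mulRight ℂ al ∘ₗ S) LinearMap.id ∘ₗ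
    (TensorProduct.comm ℂ Q Q).toLinearMap

/-- `(x ⊗ a) ⊗ (R' ⊗ R'') ↦ x · (S(R'') · al · R') · a`. -/
def uBig (S : Q →ₗ[ℂ] Q) (al : Q) : TP2 ℂ Q ⊗[ℂ] TP2 ℂ Q →ₗ[ℂ] Q :=
  mulA ℂ Q ∘ₗ TensorProduct.map LinearMap.id (mulA ℂ Q ∘ₗ (TensorProduct.comm ℂ Q Q).toLinearMap)
    ∘ₗ (TensorProduct.assoc ℂ Q Q Q).toLinearMap ∘ₗ TensorProduct.map LinearMap.id (uMap2 S al)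

/-- The Drinfeld element `u = Σ S(Φ''·b·S(Φ'''))·S(R'')·α·R'·Φ'` (with `α = 1`). -/
def uDrin (β : ℂ) (S : Q →ₗ[ℂ] Q) : Q :=
  uBig S 1 (uMap1 S (bbEl β) (Phi β) ⊗ₜ[ℂ] Rmat β)

/-- The balancing element `g = b · S(α) · v⁻¹ · u` (with `α = 1`). -/
def balG (β : ℂ) (S : Q →ₗ[ℂ] Q) : Q :=
  bbEl β * S 1 * Ring.inverse (vRib β) * uDrin β S

/-- The cointegral `c = (β²/i)·E·F·(1 + K + K² + K³)`. -/
def cInt (β : ℂ) : Q := (β ^ 2 / Complex.I) • (gE * gF * (1 + gK + gK ^ 2 + gK ^ 3))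

/-- The q-trace of a one-dimensional representation, with balancing element `K⁻¹`. -/
def qTr1 (ρ : Q →ₐ[ℂ] ℂ) : Q →ₗ[ℂ] ℂ := ρ.toLinearMap ∘ₗ LinearMap.mulLeft ℂ gK

/-- The q-trace of a two-dimensional (matrix) representation, with balancing element `K⁻¹`. -/
def qTrM (ρ : Q →ₐ[ℂ] Matrix (Fin 2) (Fin 2) ℂ) : Q →ₗ[ℂ] ℂ :=
  Matrix.traceLinearMap (Fin 2) ℂ ℂ ∘ₗ ρ.toLinearMap ∘ₗ LinearMap.mulLeft ℂ gK

/-- The Drinfeld mapping `φ ↦ (φ ⊗ id)(M)`. -/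
def drinfeldImg (β : ℂ) (φ : Q →ₗ[ℂ] ℂ) : Q :=
  (TensorProduct.lid ℂ Q) (TensorProduct.map φ LinearMap.id (Mmat β))

/-!
Applying `ε` to the second or to the third factor of the 3-cocycle identity and cancelling the
unit `Φ` shows that `Φ` is also counital in its outer factors. Now multiply the identity by
`1 ⊗ Φ⁻¹` on the right and apply `a ⊗ b ⊗ c ⊗ d ↦ S(a) b S(c) d`. By the antipode axiom each
coproduct, hitting two neighbouring factors, collapses to a counit, so that the factors
`(Δ ⊗ id ⊗ id)(Φ)`, `(id ⊗ Δ ⊗ id)(Φ)` and `(id ⊗ id ⊗ Δ)(Φ)` disappear; what is left is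
`Σ S(Φ') Φ'' S(Φ''') = Σ Φ̄' S(Φ̄'') Φ̄'''`. Centrality follows in the same way on applying
`a ⊗ b ⊗ c ↦ a S(b) c` to `Φ⁻¹ · (Δ ⊗ id)(Δ(a)) = (id ⊗ Δ)(Δ(a)) · Φ⁻¹`.
-/

open Algebra.TensorProduct (includeLeft includeRight one_def tmul_mul_tmul)
open Bialgebra (comulAlgHom counitAlgHom)
open Coalgebra (comul counit)
open HopfAlgebra (antipode antipode_one antipode_mul_antidistrib)

section Algebra

variable {R : Type*} [CommSemiring R] (A : Type*) [Semiring A] [Algebra R A]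
variable {M N P : Type*} [Semiring M] [Algebra R M] [Semiring N] [Algebra R N]
  [Semiring P] [Algebra R P]

/-- `id ⊗ f : A ⊗ M → A ⊗ N`, as a homomorphism of algebras. -/
def idTensor (f : M →ₐ[R] N) : A ⊗[R] M →ₐ[R] A ⊗[R] N :=
  Algebra.TensorProduct.map (AlgHom.id R A) f

variable (R) in
/-- `a ⊗ b ⊗ c ↦ a ⊗ b ⊗ c ⊗ 1`, written `Φ ↦ Φ ⊗ 1` in the cocycle identity. -/
def tensorOne : A ⊗[R] (A ⊗[R] A) →ₐ[R] A ⊗[R] (A ⊗[R] (A ⊗[R] A)) :=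
  idTensor A (idTensor A includeLeft)

variable {A}

@[simp]
theorem idTensor_tmul (f : M →ₐ[R] N) (a : A) (m : M) :
    idTensor A f (a ⊗ₜ m) = a ⊗ₜ f m :=
  rfl

theorem idTensor_id : idTensor A (AlgHom.id R M) = AlgHom.id R (A ⊗[R] M) :=
  Algebra.TensorProduct.map_id

theorem idTensor_comp_idTensor (g : N →ₐ[R] P) (f : M →ₐ[R] N) :
    (idTensor A g).comp (idTensor A f) = idTensor A (g.comp f) :=
  (Algebra.TensorProduct.map_id_comp g f).symm

theorem idTensor_idTensor (g : N →ₐ[R] P) (f : M →ₐ[R] N) (t : A ⊗[R] M) :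
    idTensor A g (idTensor A f t) = idTensor A (g.comp f) t :=
  DFunLike.congr_fun (idTensor_comp_idTensor g f) t

end Algebra

section Bialgebra

variable (R A : Type*) [CommSemiring R] [Semiring A] [Bialgebra R A]
variable (M : Type*) [Semiring M] [Algebra R M]

/-- `Δ ⊗ id : A ⊗ M → A ⊗ (A ⊗ M)`, reassociated to the right. -/
def comulTensorId : A ⊗[R] M →ₐ[R] A ⊗[R] (A ⊗[R] M) :=
  (Algebra.TensorProduct.assoc R R R A A M).toAlgHom.comp
    (Algebra.TensorProduct.map (comulAlgHom R A) (AlgHom.id R M))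

/-- `ε ⊗ id : A ⊗ M → M`. -/
def counitTensorId : A ⊗[R] M →ₐ[R] M :=
  (Algebra.TensorProduct.lid R M).toAlgHom.comp
    (Algebra.TensorProduct.map (counitAlgHom R A) (AlgHom.id R M))

/-- `id ⊗ ε : A ⊗ A → A`. -/
def idTensorCounit : A ⊗[R] A →ₐ[R] A :=
  (Algebra.TensorProduct.rid R R A).toAlgHom.comp (idTensor A (counitAlgHom R A))

variable {A} in
/-- The 3-cocycle identity
`(Δ ⊗ id ⊗ id)(Φ) · (id ⊗ id ⊗ Δ)(Φ) = (Φ ⊗ 1) · (id ⊗ Δ ⊗ id)(Φ) · (1 ⊗ Φ)`. -/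
def IsThreeCocycle (Φ : A ⊗[R] (A ⊗[R] A)) : Prop :=
  comulTensorId R A (A ⊗[R] A) Φ * idTensor A (idTensor A (comulAlgHom R A)) Φ =
    tensorOne R A Φ * idTensor A (comulTensorId R A A) Φ * (1 ⊗ₜ[R] Φ)

variable {R A M} {N : Type*} [Semiring N] [Algebra R N]

@[simp]
theorem comulTensorId_tmul (a : A) (m : M) :
    comulTensorId R A M (a ⊗ₜ m) =
      Algebra.TensorProduct.assoc R R R A A M (comul a ⊗ₜ m) :=
  rfl

@[simp]
theorem counitTensorId_tmul (a : A) (m : M) :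
    counitTensorId R A M (a ⊗ₜ m) = counit (R := R) a • m :=
  rfl

@[simp]
theorem idTensorCounit_tmul (a b : A) :
    idTensorCounit R A (a ⊗ₜ b) = counit (R := R) b • a :=
  rfl

theorem counitTensorId_comul (a : A) : counitTensorId R A A (comul a) = a :=
  (congrArg (TensorProduct.lid R A) (Coalgebra.rTensor_counit_comul a)).trans (by simp)

theorem idTensorCounit_comul (a : A) : idTensorCounit R A (comul a) = a :=
  (congrArg (TensorProduct.rid R A) (Coalgebra.lTensor_counit_comul a)).trans (by simp)

theorem counitTensorId_assoc (t : A ⊗[R] A) (m : M) :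
    counitTensorId R A (A ⊗[R] M) (Algebra.TensorProduct.assoc R R R A A M (t ⊗ₜ m)) =
      counitTensorId R A A t ⊗ₜ m := by
  induction t with
  | zero => simp
  | add s t hs ht => simp only [add_tmul, map_add, hs, ht]
  | tmul a b => simp [smul_tmul']

theorem idTensor_counitTensorId_assoc (t : A ⊗[R] A) (m : M) :
    idTensor A (counitTensorId R A M) (Algebra.TensorProduct.assoc R R R A A M (t ⊗ₜ m)) =
      idTensorCounit R A t ⊗ₜ m := by
  induction t with
  | zero => simp
  | add s t hs ht => simp only [add_tmul, map_add, hs, ht]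
  | tmul a b => simp [smul_tmul]

theorem counitTensorId_comp_comulAlgHom :
    (counitTensorId R A A).comp (comulAlgHom R A) = AlgHom.id R A :=
  AlgHom.ext counitTensorId_comul

theorem counitTensorId_comp_comulTensorId :
    (counitTensorId R A (A ⊗[R] M)).comp (comulTensorId R A M) = AlgHom.id R (A ⊗[R] M) :=
  Algebra.TensorProduct.ext' fun a m => by simp [counitTensorId_assoc, counitTensorId_comul]

theorem idTensor_counitTensorId_comp_comulTensorId :
    (idTensor A (counitTensorId R A M)).comp (comulTensorId R A M) =
      AlgHom.id R (A ⊗[R] M) :=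
  Algebra.TensorProduct.ext' fun a m => by
    simp [idTensor_counitTensorId_assoc, idTensorCounit_comul]

theorem counitTensorId_comp_idTensor (f : M →ₐ[R] N) :
    (counitTensorId R A N).comp (idTensor A f) = f.comp (counitTensorId R A M) :=
  Algebra.TensorProduct.ext' fun a m => by simp

theorem idTensor_idTensor_comp_comulTensorId (f : M →ₐ[R] N) :
    (idTensor A (idTensor A f)).comp (comulTensorId R A M) =
      (comulTensorId R A N).comp (idTensor A f) :=
  Algebra.TensorProduct.ext' fun a m => by
    simp only [AlgHom.comp_apply, comulTensorId_tmul, idTensor_tmul]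
    induction comul (R := R) a with
    | zero => simp
    | add s t hs ht => simp only [add_tmul, map_add, hs, ht]
    | tmul b c => simp

theorem idTensorCounit_comp_idTensor_counitTensorId_comp_includeLeft :
    (idTensorCounit R A).comp (idTensor A ((counitTensorId R A A).comp includeLeft)) =
      idTensorCounit R A :=
  Algebra.TensorProduct.ext' fun a b => by simp

namespace IsThreeCocycle

variable {Φ : A ⊗[R] (A ⊗[R] A)}

theorem counitTensorId_eq_one (hcoc : IsThreeCocycle R Φ) (hΦ : IsUnit Φ)
    (hcu : idTensor A (counitTensorId R A A) Φ = 1) :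
    counitTensorId R A (A ⊗[R] A) Φ = 1 := by
  have collapse (f : A →ₐ[R] A ⊗[R] A) :
      idTensor A (counitTensorId R A (A ⊗[R] A)) (idTensor A (idTensor A f) Φ) = 1 := by
    rw [idTensor_idTensor, counitTensorId_comp_idTensor, ← idTensor_idTensor, hcu, map_one]
  have h₁ : idTensor A (counitTensorId R A (A ⊗[R] A)) (comulTensorId R A (A ⊗[R] A) Φ) = Φ :=
    DFunLike.congr_fun idTensor_counitTensorId_comp_comulTensorId Φ
  have h₂ : idTensor A (counitTensorId R A (A ⊗[R] A)) (idTensor A (comulTensorId R A A) Φ) =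
      Φ := by
    rw [idTensor_idTensor, counitTensorId_comp_comulTensorId, idTensor_id, AlgHom.id_apply]
  have h := congrArg (idTensor A (counitTensorId R A (A ⊗[R] A))) hcoc
  rw [map_mul, map_mul, map_mul, h₁, h₂, tensorOne, collapse, collapse, one_mul, mul_one,
    idTensor_tmul, eq_comm, hΦ.mul_eq_left] at h
  simpa using congrArg (counitTensorId R A (A ⊗[R] A)) h

theorem idTensor_idTensorCounit_eq_one (hcoc : IsThreeCocycle R Φ) (hΦ : IsUnit Φ)
    (hcu : idTensor A (counitTensorId R A A) Φ = 1) :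
    idTensor A (idTensorCounit R A) Φ = 1 := by
  have h₁ : idTensor A (idTensor A (counitTensorId R A A)) (comulTensorId R A (A ⊗[R] A) Φ) =
      1 := by
    rw [← AlgHom.comp_apply, idTensor_idTensor_comp_comulTensorId, AlgHom.comp_apply, hcu,
      map_one]
  have h₂ : idTensor A (idTensor A (counitTensorId R A A)) (idTensor A (comulTensorId R A A) Φ) =
      Φ := by
    rw [idTensor_idTensor, idTensor_counitTensorId_comp_comulTensorId, idTensor_id, AlgHom.id_apply]
  have h₃ : idTensor A (idTensor A (counitTensorId R A A))
      (idTensor A (idTensor A (comulAlgHom R A)) Φ) = Φ := by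
    rw [idTensor_idTensor, idTensor_comp_idTensor, counitTensorId_comp_comulAlgHom, idTensor_id,
      idTensor_id, AlgHom.id_apply]
  have h := congrArg (idTensor A (idTensor A (counitTensorId R A A))) hcoc
  rw [map_mul, map_mul, map_mul, h₁, h₂, h₃, idTensor_tmul, hcu, ← one_def, one_mul, mul_one,
    eq_comm, hΦ.mul_eq_right, tensorOne, idTensor_idTensor, idTensor_comp_idTensor] at h
  have h' := congrArg (idTensor A (idTensorCounit R A)) h
  rwa [idTensor_idTensor, idTensorCounit_comp_idTensor_counitTensorId_comp_includeLeft,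
    map_one] at h'

end IsThreeCocycle

end Bialgebra

section HopfAlgebra

variable (R A : Type*) [CommSemiring R] [Semiring A] [HopfAlgebra R A]

/-- `a ⊗ b ↦ S(a) b`. -/
def antipodeMul : A ⊗[R] A →ₗ[R] A :=
  LinearMap.mul' R A ∘ₗ (antipode R).rTensor A

/-- `a ⊗ b ↦ a S(b)`. -/
def mulAntipode : A ⊗[R] A →ₗ[R] A :=
  LinearMap.mul' R A ∘ₗ (antipode R).lTensor A

/-- `a ⊗ b ⊗ c ↦ a S(b) c`. -/
def mulAntipodeMul : A ⊗[R] (A ⊗[R] A) →ₗ[R] A :=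
  LinearMap.mul' R A ∘ₗ (antipodeMul R A).lTensor A

variable {R A}

/-- `a ⊗ m ↦ S(a) f(m)`. -/
def antipodeMulMap {M : Type*} [AddCommMonoid M] [Module R M] (f : M →ₗ[R] A) :
    A ⊗[R] M →ₗ[R] A :=
  LinearMap.mul' R A ∘ₗ TensorProduct.map (antipode R) f

variable (R A)

/-- `a ⊗ b ⊗ c ↦ S(a) b S(c)`. -/
def antipodeMulAntipode : A ⊗[R] (A ⊗[R] A) →ₗ[R] A :=
  antipodeMulMap (mulAntipode R A)

/-- `a ⊗ b ⊗ c ⊗ d ↦ S(a) b S(c) d`. -/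
def antipodeMulAntipodeMul : A ⊗[R] (A ⊗[R] (A ⊗[R] A)) →ₗ[R] A :=
  antipodeMulMap (mulAntipodeMul R A)

variable {R A}

@[simp]
theorem antipodeMul_tmul (a b : A) : antipodeMul R A (a ⊗ₜ b) = antipode R a * b :=
  rfl

@[simp]
theorem mulAntipode_tmul (a b : A) : mulAntipode R A (a ⊗ₜ b) = a * antipode R b :=
  rfl

@[simp]
theorem mulAntipodeMul_tmul (a : A) (t : A ⊗[R] A) :
    mulAntipodeMul R A (a ⊗ₜ t) = a * antipodeMul R A t :=
  rfl

@[simp]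
theorem antipodeMulMap_tmul {M : Type*} [AddCommMonoid M] [Module R M] (f : M →ₗ[R] A)
    (a : A) (m : M) : antipodeMulMap f (a ⊗ₜ m) = antipode R a * f m :=
  rfl

theorem antipodeMul_mul_tmul (t : A ⊗[R] A) (a b : A) :
    antipodeMul R A (t * (a ⊗ₜ b)) = antipode R a * antipodeMul R A t * b := by
  induction t with
  | zero => simp
  | add s t hs ht => simp only [add_mul, mul_add, map_add, hs, ht]
  | tmul c d => simp [antipode_mul_antidistrib, mul_assoc]

theorem mulAntipode_tmul_mul (a b : A) (t : A ⊗[R] A) :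
    mulAntipode R A ((a ⊗ₜ b) * t) = a * mulAntipode R A t * antipode R b := by
  induction t with
  | zero => simp
  | add s t hs ht => simp only [add_mul, mul_add, map_add, hs, ht]
  | tmul c d => simp [antipode_mul_antidistrib, mul_assoc]

theorem antipodeMul_comul_mul (a : A) (t : A ⊗[R] A) :
    antipodeMul R A (comul a * t) = counit (R := R) a • antipodeMul R A t := by
  have antipodeMul_comul : antipodeMul R A (comul a) = algebraMap R A (counit a) :=
    HopfAlgebra.mul_antipode_rTensor_comul_apply a
  induction t with
  | zero => simp
  | add s t hs ht => simp only [mul_add, map_add, smul_add, hs, ht]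
  | tmul b c => simp [antipodeMul_mul_tmul, antipodeMul_comul, Algebra.algebraMap_eq_smul_one]

theorem mulAntipode_mul_comul (t : A ⊗[R] A) (a : A) :
    mulAntipode R A (t * comul a) = counit (R := R) a • mulAntipode R A t := by
  have mulAntipode_comul : mulAntipode R A (comul a) = algebraMap R A (counit a) :=
    HopfAlgebra.mul_antipode_lTensor_comul_apply a
  induction t with
  | zero => simp
  | add s t hs ht => simp only [add_mul, map_add, smul_add, hs, ht]
  | tmul b c => simp [mulAntipode_tmul_mul, mulAntipode_comul, Algebra.algebraMap_eq_smul_one]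

theorem mulAntipodeMul_assoc_tmul (t : A ⊗[R] A) (c : A) :
    mulAntipodeMul R A (Algebra.TensorProduct.assoc R R R A A A (t ⊗ₜ c)) =
      mulAntipode R A t * c := by
  induction t with
  | zero => simp
  | add s t hs ht => simp only [add_tmul, add_mul, map_add, hs, ht]
  | tmul a b => simp [mul_assoc]

theorem mulAntipodeMul_mul_comulTensorId (X : A ⊗[R] (A ⊗[R] A)) (t : A ⊗[R] A) :
    mulAntipodeMul R A (X * comulTensorId R A A t) =
      mulAntipodeMul R A X * counitTensorId R A A t := by
  obtain ⟨Y, rfl⟩ := (Algebra.TensorProduct.assoc R R R A A A).surjective X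
  induction t with
  | zero => simp
  | add s t hs ht => simp only [mul_add, map_add, hs, ht]
  | tmul a b =>
    induction Y with
    | zero => simp
    | add s t hs ht => simp only [add_mul, map_add, hs, ht]
    | tmul s c =>
      simp only [comulTensorId_tmul, ← map_mul, tmul_mul_tmul, mulAntipodeMul_assoc_tmul,
        mulAntipode_mul_comul, counitTensorId_tmul, smul_mul_assoc, mul_smul_comm, mul_assoc]

theorem mulAntipodeMul_idTensor_comul_mul (t : A ⊗[R] A) (X : A ⊗[R] (A ⊗[R] A)) :
    mulAntipodeMul R A (idTensor A (comulAlgHom R A) t * X) =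
      idTensorCounit R A t * mulAntipodeMul R A X := by
  induction t with
  | zero => simp
  | add s t hs ht => simp only [add_mul, map_add, hs, ht]
  | tmul a b =>
    induction X with
    | zero => simp
    | add s t hs ht => simp only [mul_add, map_add, hs, ht]
    | tmul c s => simp [antipodeMul_comul_mul, mul_assoc]

theorem mulAntipodeMul_mul_one_tmul_one_tmul (X : A ⊗[R] (A ⊗[R] A)) (c : A) :
    mulAntipodeMul R A (X * (1 ⊗ₜ (1 ⊗ₜ c))) = mulAntipodeMul R A X * c := by
  induction X with
  | zero => simp
  | add s t hs ht => simp only [add_mul, map_add, hs, ht]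
  | tmul a t => simp [antipodeMul_mul_tmul, antipode_one, mul_assoc]

theorem mulAntipodeMul_tmul_one_mul (c : A) (X : A ⊗[R] (A ⊗[R] A)) :
    mulAntipodeMul R A ((c ⊗ₜ 1) * X) = c * mulAntipodeMul R A X := by
  induction X with
  | zero => simp
  | add s t hs ht => simp only [mul_add, map_add, hs, ht]
  | tmul a t => simp [mul_assoc]

theorem commute_mulAntipodeMul {X : A ⊗[R] (A ⊗[R] A)} {a : A}
    (hX : X * comulTensorId R A A (comul a) = idTensor A (comulAlgHom R A) (comul a) * X) :
    Commute (mulAntipodeMul R A X) a := by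
  have h := congrArg (mulAntipodeMul R A) hX
  rwa [mulAntipodeMul_mul_comulTensorId, mulAntipodeMul_idTensor_comul_mul, counitTensorId_comul,
    idTensorCounit_comul] at h

section

variable {M P : Type*} [Semiring M] [Algebra R M] [Semiring P] [Algebra R P]

theorem antipodeMulMap_mul_lTensor_assoc_tmul (g : M →ₗ[R] A) (t : A ⊗[R] A) (m : M) :
    antipodeMulMap (LinearMap.mul' R A ∘ₗ g.lTensor A)
      (Algebra.TensorProduct.assoc R R R A A M (t ⊗ₜ m)) = antipodeMul R A t * g m := by
  induction t with
  | zero => simp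
  | add s t hs ht => simp only [add_tmul, add_mul, map_add, hs, ht]
  | tmul a b => simp [mul_assoc]

theorem antipodeMulMap_comulTensorId_mul (g : M →ₗ[R] A) (X : A ⊗[R] M)
    (T : A ⊗[R] (A ⊗[R] M)) :
    antipodeMulMap (LinearMap.mul' R A ∘ₗ g.lTensor A) (comulTensorId R A M X * T) =
      antipodeMulMap (LinearMap.mul' R A ∘ₗ g.lTensor A)
        ((1 ⊗ₜ (1 ⊗ₜ counitTensorId R A M X)) * T) := by
  obtain ⟨Y, rfl⟩ := (Algebra.TensorProduct.assoc R R R A A M).surjective T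
  have assoc_one_tmul (m : M) : Algebra.TensorProduct.assoc R R R A A M (1 ⊗ₜ m) =
      1 ⊗ₜ (1 ⊗ₜ m) :=
    rfl
  rw [← assoc_one_tmul]
  induction X with
  | zero => simp
  | add s t hs ht => simp only [add_mul, tmul_add, map_add, hs, ht]
  | tmul a m =>
    induction Y with
    | zero => simp
    | add s t hs ht => simp only [mul_add, map_add, hs, ht]
    | tmul t n =>
      simp only [comulTensorId_tmul, counitTensorId_tmul, ← map_mul, tmul_mul_tmul, one_mul,
        antipodeMulMap_mul_lTensor_assoc_tmul, antipodeMul_comul_mul, map_smul, smul_mul_assoc,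
        mul_smul_comm]

theorem antipodeMulMap_mul_idTensor_congr {f : M →ₗ[R] A} {φ ψ : P →ₐ[R] M}
    (h : ∀ m p, f (m * φ p) = f (m * ψ p)) (T : A ⊗[R] M) (X : A ⊗[R] P) :
    antipodeMulMap f (T * idTensor A φ X) = antipodeMulMap f (T * idTensor A ψ X) := by
  induction X with
  | zero => simp
  | add s t hs ht => simp only [mul_add, map_add, hs, ht]
  | tmul a p =>
    induction T with
    | zero => simp
    | add s t hs ht => simp only [add_mul, map_add, hs, ht]
    | tmul b m => simp [h]

theorem antipodeMulMap_idTensor_mul_congr {f : M →ₗ[R] A} {φ ψ : P →ₐ[R] M}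
    (h : ∀ p m, f (φ p * m) = f (ψ p * m)) (X : A ⊗[R] P) (T : A ⊗[R] M) :
    antipodeMulMap f (idTensor A φ X * T) = antipodeMulMap f (idTensor A ψ X * T) := by
  induction X with
  | zero => simp
  | add s t hs ht => simp only [add_mul, map_add, hs, ht]
  | tmul a p =>
    induction T with
    | zero => simp
    | add s t hs ht => simp only [mul_add, map_add, hs, ht]
    | tmul b m => simp [h]

theorem antipodeMulMap_idTensor (f : M →ₗ[R] A) (φ : P →ₐ[R] M) (X : A ⊗[R] P) :
    antipodeMulMap f (idTensor A φ X) = antipodeMulMap (f ∘ₗ φ.toLinearMap) X := by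
  induction X with
  | zero => simp
  | add s t hs ht => simp only [map_add, hs, ht]
  | tmul a p => simp

end

theorem antipodeMulAntipodeMul_tensorOne (X : A ⊗[R] (A ⊗[R] A)) :
    antipodeMulAntipodeMul R A (tensorOne R A X) = antipodeMulAntipode R A X := by
  have mulAntipodeMul_idTensor_includeLeft :
      mulAntipodeMul R A ∘ₗ (idTensor A includeLeft).toLinearMap = mulAntipode R A :=
    TensorProduct.ext' fun a b => by simp
  rw [antipodeMulAntipodeMul, tensorOne, antipodeMulMap_idTensor,
    mulAntipodeMul_idTensor_includeLeft, antipodeMulAntipode]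

theorem antipodeMulAntipodeMul_one_tmul (X : A ⊗[R] (A ⊗[R] A)) :
    antipodeMulAntipodeMul R A (1 ⊗ₜ X) = mulAntipodeMul R A X := by
  simp [antipodeMulAntipodeMul, antipode_one]

theorem antipodeMulAntipodeMul_comulTensorId_mul {X : A ⊗[R] (A ⊗[R] A)}
    (hX : counitTensorId R A (A ⊗[R] A) X = 1) (T : A ⊗[R] (A ⊗[R] (A ⊗[R] A))) :
    antipodeMulAntipodeMul R A (comulTensorId R A (A ⊗[R] A) X * T) =
      antipodeMulAntipodeMul R A T := by
  rw [antipodeMulAntipodeMul, mulAntipodeMul, antipodeMulMap_comulTensorId_mul, hX, ← one_def,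
    ← one_def, one_mul]

theorem antipodeMulAntipodeMul_mul_idTensor_comulTensorId {X : A ⊗[R] (A ⊗[R] A)}
    (hX : idTensor A (counitTensorId R A A) X = 1) (T : A ⊗[R] (A ⊗[R] (A ⊗[R] A))) :
    antipodeMulAntipodeMul R A (T * idTensor A (comulTensorId R A A) X) =
      antipodeMulAntipodeMul R A T := by
  rw [antipodeMulAntipodeMul, antipodeMulMap_mul_idTensor_congr
    (ψ := (includeRight.comp includeRight).comp (counitTensorId R A A)) fun m t => ?_,
    ← idTensor_idTensor, hX, map_one, mul_one]
  exact (mulAntipodeMul_mul_comulTensorId m t).trans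
    (mulAntipodeMul_mul_one_tmul_one_tmul m _).symm

theorem antipodeMulAntipodeMul_idTensor_idTensor_comul_mul {X : A ⊗[R] (A ⊗[R] A)}
    (hX : idTensor A (idTensorCounit R A) X = 1) (T : A ⊗[R] (A ⊗[R] (A ⊗[R] A))) :
    antipodeMulAntipodeMul R A (idTensor A (idTensor A (comulAlgHom R A)) X * T) =
      antipodeMulAntipodeMul R A T := by
  rw [antipodeMulAntipodeMul, antipodeMulMap_idTensor_mul_congr
    (ψ := includeLeft.comp (idTensorCounit R A)) fun t m => ?_,
    ← idTensor_idTensor, hX, map_one, one_mul]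
  exact (mulAntipodeMul_idTensor_comul_mul t m).trans (mulAntipodeMul_tmul_one_mul _ m).symm

theorem IsThreeCocycle.antipodeMulAntipode_eq_mulAntipodeMul_inv
    {Φ : (A ⊗[R] (A ⊗[R] A))ˣ} (hcoc : IsThreeCocycle R (Φ : A ⊗[R] (A ⊗[R] A)))
    (hcu : idTensor A (counitTensorId R A A) (Φ : A ⊗[R] (A ⊗[R] A)) = 1) :
    antipodeMulAntipode R A Φ = mulAntipodeMul R A ↑Φ⁻¹ := by
  have hcoc' : tensorOne R A Φ * idTensor A (comulTensorId R A A) Φ =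
      comulTensorId R A (A ⊗[R] A) Φ *
        (idTensor A (idTensor A (comulAlgHom R A)) Φ * (1 ⊗ₜ[R] (↑Φ⁻¹ : A ⊗[R] (A ⊗[R] A)))) := by
    rw [← mul_assoc, hcoc, mul_assoc, tmul_mul_tmul, Units.mul_inv, one_mul, ← one_def, mul_one]
  calc
    antipodeMulAntipode R A Φ
      = antipodeMulAntipodeMul R A (tensorOne R A Φ * idTensor A (comulTensorId R A A) Φ) := by
        rw [antipodeMulAntipodeMul_mul_idTensor_comulTensorId hcu,
          antipodeMulAntipodeMul_tensorOne]
    _ = antipodeMulAntipodeMul R A (1 ⊗ₜ (↑Φ⁻¹ : A ⊗[R] (A ⊗[R] A))) := by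
        rw [hcoc', antipodeMulAntipodeMul_comulTensorId_mul
            (hcoc.counitTensorId_eq_one Φ.isUnit hcu),
          antipodeMulAntipodeMul_idTensor_idTensor_comul_mul
            (hcoc.idTensor_idTensorCounit_eq_one Φ.isUnit hcu)]
    _ = mulAntipodeMul R A ↑Φ⁻¹ := antipodeMulAntipodeMul_one_tmul _

theorem statement13_general (Φ : (A ⊗[R] (A ⊗[R] A))ˣ)
    (hcu : idTensor A (counitTensorId R A A) (Φ : A ⊗[R] (A ⊗[R] A)) = 1)
    (hint : ∀ a : A, comulTensorId R A A (comul a) =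
      Φ * idTensor A (comulAlgHom R A) (comul a) * ↑Φ⁻¹)
    (hcoc : IsThreeCocycle R (Φ : A ⊗[R] (A ⊗[R] A))) :
    antipodeMulAntipode R A Φ = mulAntipodeMul R A ↑Φ⁻¹ ∧
      ∀ a : A, Commute (antipodeMulAntipode R A Φ) a := by
  have hγ := hcoc.antipodeMulAntipode_eq_mulAntipodeMul_inv hcu
  refine ⟨hγ, fun a => hγ ▸ commute_mulAntipodeMul ?_⟩
  rw [hint, mul_assoc, Units.inv_mul_cancel_left]

end HopfAlgebra

/-- The Hopf algebra with coproduct `Δ`, counit `ce` and antipode `S`. -/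
abbrev hopfAlgebraOfAntipode {k A : Type} [Field k] [Ring A] [Algebra k A]
    (Δ : A →ₐ[k] TP2 k A) (ce : A →ₐ[k] k)
    (hco : ∀ a : A, copL Δ (Δ a) = copR Δ (Δ a))
    (hcuL : ∀ a : A, cuL ce (Δ a) = a) (hcuR : ∀ a : A, cuR ce (Δ a) = a)
    (S : A →ₗ[k] A)
    (hSL : ∀ a : A, antipL S (Δ a) = ce a • (1 : A))
    (hSR : ∀ a : A, antipR S (Δ a) = ce a • (1 : A)) : HopfAlgebra k A where
  __ := Bialgebra.ofAlgHom Δ ce (AlgHom.ext hco)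
    (AlgHom.ext fun a => (TensorProduct.lid k A).injective ((hcuL a).trans (by simp)))
    (AlgHom.ext fun a => (TensorProduct.rid k A).injective ((hcuR a).trans (by simp)))
  antipode := S
  mul_antipode_rTensor_comul :=
    LinearMap.ext fun a => (hSL a).trans (Algebra.algebraMap_eq_smul_one _).symm
  mul_antipode_lTensor_comul :=
    LinearMap.ext fun a => (hSR a).trans (Algebra.algebraMap_eq_smul_one _).symm

/-- for a Hopf algebra `A` with a counital invertible 3-cocycle `Φ`
intertwining the iterated coproducts, the element `γ = Σ S(Φ')·Φ''·S(Φ''')` equals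
`Σ \barΦ'·S(\barΦ'')·\barΦ'''` and is central. -/
theorem statement13 (k : Type) [Field k] (A : Type) [Ring A] [Algebra k A]
    (Δ : A →ₐ[k] TP2 k A) (ce : A →ₐ[k] k)
    (hco : ∀ a : A, copL Δ (Δ a) = copR Δ (Δ a))
    (hcuL : ∀ a : A, cuL ce (Δ a) = a) (hcuR : ∀ a : A, cuR ce (Δ a) = a)
    (S : A →ₗ[k] A)
    (hSL : ∀ a : A, antipL S (Δ a) = ce a • (1:A))
    (hSR : ∀ a : A, antipR S (Δ a) = ce a • (1:A))
    (Φ : TP3 k A) (hΦ : IsUnit Φ) (hΦcu : cuMid ce Φ = 1)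
    (hint : ∀ a : A, copL Δ (Δ a) = Φ * copR Δ (Δ a) * Ring.inverse Φ)
    (hcoc : cop4_1 Δ Φ * cop4_3 Δ Φ = pad4 Φ * cop4_2 Δ Φ * ((1:A) ⊗ₜ[k] Φ)) :
    tmap3 S LinearMap.id S Φ = tmap3 LinearMap.id S LinearMap.id (Ring.inverse Φ) ∧
    ∀ a : A, tmap3 S LinearMap.id S Φ * a = a * tmap3 S LinearMap.id S Φ := by
  let _ := hopfAlgebraOfAntipode Δ ce hco hcuL hcuR S hSL hSR
  obtain ⟨Φ, rfl⟩ := hΦ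
  simp only [Ring.inverse_unit] at hint ⊢
  exact statement13_general Φ hΦcu hint hcoc
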